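/- arXiv:2605.14669 — 2 statements merged into one kernel-verified Lean document; each statement's English description precedes it below -/
import Mathlib

section
/- For any fixed real α > 0, the function Θ_α(t) := sin t / ((1+α)·sin((π−t)/(1+α))) is strictly increasing on the interval (0, π), and moreover Θ_α(t) → 0 as t → 0⁺ and Θ_α(t) → 1 as t → π⁻; in particular 0 < Θ_α(t) < 1 for all t ∈ (0, π). -/
open Real Filter Set Topology

/-- `Th α t = sin t / ((1+α)·sin((π−t)/(1+α)))`. -/
noncomputable def Th (α t : ℝ) : ℝ :=
  Real.sin t / ((1 + α) * Real.sin ((Real.pi - t) / (1 + α)))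

/-!
Put `c = (1 + α)⁻¹ ∈ (0, 1)` and `s = π - t`, so that `Θ_α(t) = sinc s / sinc (c s)`, a quotient
which is continuous on `[0, π]` with value `1` at `s = 0` and `0` at `s = π`. It is strictly
decreasing by Sturm's comparison argument: `f = sin` and `g = sin (c ·)` solve `f'' = -f` and
`g'' = -c² g`, so their Wronskian `f' g - f g'` vanishes at `0` and has derivative
`-(1 - c²) f g < 0` on `(0, π)`.
-/

section

variable {c s : ℝ}

/-- The Wronskian `f' g - f g'` of `f = sin` and `g = sin (c ·)`. It is the numerator of `(f / g)'`,
so its sign decides the monotonicity of `sin s / sin (c s)`. -/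
noncomputable def sinWronskian (c s : ℝ) : ℝ :=
  cos s * sin (c * s) - sin s * (c * cos (c * s))

lemma hasDerivAt_sin_const_mul (c s : ℝ) :
    HasDerivAt (fun x ↦ sin (c * x)) (c * cos (c * s)) s := by
  simpa [mul_comm] using (hasDerivAt_const_mul c).sin

lemma hasDerivAt_cos_const_mul (c s : ℝ) :
    HasDerivAt (fun x ↦ cos (c * x)) (-(c * sin (c * s))) s := by
  simpa [mul_comm] using (hasDerivAt_const_mul c).cos

lemma hasDerivAt_sinWronskian (c s : ℝ) :
    HasDerivAt (sinWronskian c) (-((1 - c ^ 2) * (sin s * sin (c * s)))) s := by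
  have h_deriv := ((hasDerivAt_cos s).mul (hasDerivAt_sin_const_mul c s)).sub
    ((hasDerivAt_sin s).mul ((hasDerivAt_cos_const_mul c s).const_mul c))
  exact h_deriv.congr_deriv (by ring)

lemma sin_const_mul_pos (hc₀ : 0 < c) (hc₁ : c < 1) (hs : s ∈ Ioc 0 π) : 0 < sin (c * s) :=
  sin_pos_of_pos_of_lt_pi (mul_pos hc₀ hs.1) ((mul_lt_of_lt_one_left hs.1 hc₁).trans_le hs.2)

lemma strictAntiOn_sinWronskian (hc₀ : 0 < c) (hc₁ : c < 1) :
    StrictAntiOn (sinWronskian c) (Icc 0 π) := by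
  refine strictAntiOn_of_deriv_neg (convex_Icc 0 π)
    (fun s _ ↦ (hasDerivAt_sinWronskian c s).continuousAt.continuousWithinAt) fun s hs ↦ ?_
  rw [interior_Icc] at hs
  rw [(hasDerivAt_sinWronskian c s).deriv, neg_lt_zero]
  have h_coeff : 0 < 1 - c ^ 2 := sub_pos.2 (pow_lt_one₀ hc₀.le hc₁ two_ne_zero)
  exact mul_pos h_coeff (mul_pos (sin_pos_of_mem_Ioo hs)
    (sin_const_mul_pos hc₀ hc₁ (Ioo_subset_Ioc_self hs)))

lemma sinWronskian_neg (hc₀ : 0 < c) (hc₁ : c < 1) (hs : s ∈ Ioc 0 π) : sinWronskian c s < 0 := by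
  have h_lt := strictAntiOn_sinWronskian hc₀ hc₁ (left_mem_Icc.2 pi_pos.le)
    (Ioc_subset_Icc_self hs) hs.1
  simpa [sinWronskian] using h_lt

/-- The quotient `sinc s / sinc (c s)`, which extends `sin s / (c⁻¹ sin (c s))` continuously to
`s = 0`. In the variable `s = π - t` it is `Th α t` for `c = (1 + α)⁻¹`. -/
noncomputable def sincRatio (c s : ℝ) : ℝ :=
  sinc s / sinc (c * s)

lemma sincRatio_zero (c : ℝ) : sincRatio c 0 = 1 := by
  simp [sincRatio]

lemma sincRatio_pi (c : ℝ) : sincRatio c π = 0 := by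
  simp [sincRatio, sinc_of_ne_zero pi_ne_zero]

lemma sincRatio_of_ne_zero (hc : c ≠ 0) (hs : s ≠ 0) :
    sincRatio c s = c * (sin s / sin (c * s)) := by
  rw [sincRatio, sinc_of_ne_zero hs, sinc_of_ne_zero (mul_ne_zero hc hs)]
  field_simp

lemma hasDerivAt_sincRatio (hs : s ≠ 0) (h_sin : sin (c * s) ≠ 0) :
    HasDerivAt (sincRatio c) (c * (sinWronskian c s / sin (c * s) ^ 2)) s := by
  have hc : c ≠ 0 := by
    rintro rfl
    simp at h_sin
  have h_deriv := ((hasDerivAt_sin s).div (hasDerivAt_sin_const_mul c s) h_sin).const_mul c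
  refine h_deriv.congr_of_eventuallyEq ?_
  filter_upwards [eventually_ne_nhds hs] with x hx using sincRatio_of_ne_zero hc hx

lemma continuousAt_sincRatio (h_sinc : sinc (c * s) ≠ 0) : ContinuousAt (sincRatio c) s :=
  continuous_sinc.continuousAt.div
    (continuous_sinc.comp (continuous_const_mul c)).continuousAt h_sinc

lemma sinc_const_mul_pos (hc₀ : 0 < c) (hc₁ : c < 1) (hs : s ∈ Icc 0 π) : 0 < sinc (c * s) := by
  rcases hs.1.eq_or_lt with rfl | hs₀
  · simp
  · have hcs : 0 < c * s := mul_pos hc₀ hs₀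
    rw [sinc_of_ne_zero hcs.ne']
    exact div_pos (sin_const_mul_pos hc₀ hc₁ ⟨hs₀, hs.2⟩) hcs

lemma strictAntiOn_sincRatio (hc₀ : 0 < c) (hc₁ : c < 1) :
    StrictAntiOn (sincRatio c) (Icc 0 π) := by
  refine strictAntiOn_of_deriv_neg (convex_Icc 0 π) (fun s hs ↦ (continuousAt_sincRatio
    (sinc_const_mul_pos hc₀ hc₁ hs).ne').continuousWithinAt) fun s hs ↦ ?_
  rw [interior_Icc] at hs
  have hs' : s ∈ Ioc 0 π := Ioo_subset_Ioc_self hs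
  have h_sin : 0 < sin (c * s) := sin_const_mul_pos hc₀ hc₁ hs'
  rw [(hasDerivAt_sincRatio hs.1.ne' h_sin.ne').deriv]
  exact mul_neg_of_pos_of_neg hc₀
    (div_neg_of_neg_of_pos (sinWronskian_neg hc₀ hc₁ hs') (pow_pos h_sin 2))

lemma sincRatio_mem_Ioo (hc₀ : 0 < c) (hc₁ : c < 1) (hs : s ∈ Ioo 0 π) :
    sincRatio c s ∈ Ioo 0 1 := by
  simpa only [sincRatio_zero, sincRatio_pi] using (strictAntiOn_sincRatio hc₀ hc₁).mapsTo_Ioo hs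

lemma tendsto_sincRatio_pi_sub (hc₀ : 0 < c) (hc₁ : c < 1) {t : ℝ} (ht : t ∈ Icc 0 π) :
    Tendsto (fun x ↦ sincRatio c (π - x)) (𝓝 t) (𝓝 (sincRatio c (π - t))) := by
  have h_mem : π - t ∈ Icc 0 π := ⟨sub_nonneg.2 ht.2, sub_le_self π ht.1⟩
  exact (continuousAt_sincRatio (sinc_const_mul_pos hc₀ hc₁ h_mem).ne').tendsto.comp
    (tendsto_id.const_sub π)

end

lemma Th_eq_sincRatio {α t : ℝ} (hα : 1 + α ≠ 0) (ht : t ≠ π) :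
    Th α t = sincRatio (1 + α)⁻¹ (π - t) := by
  rw [sincRatio_of_ne_zero (inv_ne_zero hα) (sub_ne_zero.2 ht.symm), sin_pi_sub, Th,
    inv_mul_eq_div (1 + α) (π - t), mul_comm (1 + α), ← div_div, div_eq_inv_mul _ (1 + α)]

theorem stmt3 (α : ℝ) (hα : 0 < α) :
    StrictMonoOn (Th α) (Set.Ioo 0 Real.pi) ∧
    Tendsto (Th α) (𝓝[>] (0:ℝ)) (𝓝 0) ∧
    Tendsto (Th α) (𝓝[<] Real.pi) (𝓝 1) ∧
    ∀ t ∈ Set.Ioo 0 Real.pi, Th α t ∈ Set.Ioo (0:ℝ) 1 := by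
  have hc₀ : 0 < (1 + α)⁻¹ := by positivity
  have hc₁ : (1 + α)⁻¹ < 1 := inv_lt_one_of_one_lt₀ (lt_add_of_pos_right 1 hα)
  have h_eq : EqOn (fun t ↦ sincRatio (1 + α)⁻¹ (π - t)) (Th α) (Ioo 0 π) :=
    fun t ht ↦ (Th_eq_sincRatio (by positivity) ht.2.ne).symm
  have h_mem {t : ℝ} (ht : t ∈ Ioo 0 π) : π - t ∈ Ioo 0 π :=
    ⟨sub_pos.2 ht.2, sub_lt_self π ht.1⟩
  refine ⟨?_, ?_, ?_, fun t ht ↦ h_eq ht ▸ sincRatio_mem_Ioo hc₀ hc₁ (h_mem ht)⟩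
  · refine StrictMonoOn.congr (fun x hx y hy hxy ↦ ?_) h_eq
    exact strictAntiOn_sincRatio hc₀ hc₁ (Ioo_subset_Icc_self (h_mem hy))
      (Ioo_subset_Icc_self (h_mem hx)) (sub_lt_sub_left hxy π)
  · have h_lim := tendsto_sincRatio_pi_sub hc₀ hc₁ (left_mem_Icc.2 pi_pos.le)
    rw [sub_zero, sincRatio_pi] at h_lim
    exact (h_lim.mono_left nhdsWithin_le_nhds).congr'
      (h_eq.eventuallyEq_of_mem (Ioo_mem_nhdsGT pi_pos))
  · have h_lim := tendsto_sincRatio_pi_sub hc₀ hc₁ (right_mem_Icc.2 pi_pos.le)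
    rw [sub_self, sincRatio_zero] at h_lim
    exact (h_lim.mono_left nhdsWithin_le_nhds).congr'
      (h_eq.eventuallyEq_of_mem (Ioo_mem_nhdsLT pi_pos))
end

section
/- Fix a real α > 0, and define the complex-valued function ξ of a real variable by ξ(φ) := 1 − 2·Θ_{1/α}(φ)^α · exp(−i·(π−φ)/(1+1/α)) for φ ∈ (0, π). Then for every φ ∈ (0, π), ξ is differentiable at φ and its derivative ξ′(φ) is nonzero. -/
open Real Filter Set Topology

/-- `xi α φ = 1 − 2·Θ_{1/α}(φ)^α · exp(−i(π−φ)/(1+1/α))`. -/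
noncomputable def xi (α φ : ℝ) : ℂ :=
  1 - ((2 * (Th (1/α) φ) ^ α : ℝ) : ℂ) *
    Complex.exp (-Complex.I * (((Real.pi - φ) / (1 + 1/α) : ℝ) : ℂ))

/-! In polar coordinates about `1`, the curve `ξ` has radius `2 Θ_{1/α}^α`, which is positive, and
angle an affine function of `φ` with nonzero slope. The component of the velocity orthogonal to the
radius vector is the radius times the angular speed, so it does not vanish, whatever the derivative
of the radius is.

The denominator of `Θ_{1/α}` is even in `1 + 1/α`, so `Θ_{1/α} > 0` on `(0, π)` as soon as
`|1 + 1/α| ≥ 1`, which allows `-1/2 ≤ α < 0` besides `α > 0`. -/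

lemma mul_sin_div_pos {c x : ℝ} (hc : 1 ≤ |c|) (hx : x ∈ Ioo 0 π) : 0 < c * sin (x / c) := by
  have hc₀ : 0 < |c| := one_pos.trans_le hc
  have even_in_c : |c| * sin (x / |c|) = c * sin (x / c) := by
    rcases abs_choice c with h | h <;> simp only [h, div_neg, sin_neg, neg_mul_neg]
  rw [← even_in_c]
  exact mul_pos hc₀ <| sin_pos_of_pos_of_lt_pi (div_pos hx.1 hc₀) <|
    (div_le_self hx.1.le hc).trans_lt hx.2

lemma Th_pos {β t : ℝ} (hβ : 1 ≤ |1 + β|) (ht : t ∈ Ioo 0 π) : 0 < Th β t :=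
  div_pos (sin_pos_of_mem_Ioo ht) <|
    mul_sin_div_pos hβ ⟨sub_pos.mpr ht.2, sub_lt_self π ht.1⟩

lemma differentiableAt_Th {β t : ℝ} (h : Th β t ≠ 0) : DifferentiableAt ℝ (Th β) t := by
  have denom_ne_zero : (1 + β) * sin ((π - t) / (1 + β)) ≠ 0 := (div_ne_zero_iff.mp h).2
  exact differentiableAt_sin.div (by fun_prop) denom_ne_zero

lemma hasDerivAt_ofReal_mul_cexp_neg_I_mul {r θ : ℝ → ℝ} {r' θ' x : ℝ}
    (hr : HasDerivAt r r' x) (hθ : HasDerivAt θ θ' x) :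
    HasDerivAt (fun t ↦ (r t : ℂ) * Complex.exp (-Complex.I * θ t))
      ((r' - r x * θ' * Complex.I) * Complex.exp (-Complex.I * θ x)) x := by
  refine (hr.ofReal_comp.mul (hθ.ofReal_comp.const_mul (-Complex.I)).cexp).congr_deriv ?_
  ring

lemma ofReal_sub_ofReal_mul_I_ne_zero {a b : ℝ} (hb : b ≠ 0) : (a - b * Complex.I : ℂ) ≠ 0 :=
  fun h ↦ hb <| by simpa using congrArg Complex.im h

lemma exists_hasDerivAt_xi_ne_zero {α φ : ℝ} (hTh : 0 < Th (1 / α) φ) :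
    ∃ D : ℂ, HasDerivAt (xi α) D φ ∧ D ≠ 0 := by
  have slope_ne_zero : -1 / (1 + 1 / α) ≠ 0 :=
    div_ne_zero (by norm_num) (left_ne_zero_of_mul (div_ne_zero_iff.mp hTh.ne').2)
  have radius_ne_zero : 2 * Th (1 / α) φ ^ α ≠ 0 := by positivity
  have hradius : DifferentiableAt ℝ (fun t ↦ 2 * Th (1 / α) t ^ α) φ :=
    ((differentiableAt_Th hTh.ne').rpow_const (.inl hTh.ne')).const_mul 2
  have hangle : HasDerivAt (fun t ↦ (π - t) / (1 + 1 / α)) (-1 / (1 + 1 / α)) φ :=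
    ((hasDerivAt_id φ).const_sub π).div_const _
  refine ⟨_, (hasDerivAt_ofReal_mul_cexp_neg_I_mul hradius.hasDerivAt hangle).const_sub 1, ?_⟩
  refine neg_ne_zero.mpr (mul_ne_zero ?_ (Complex.exp_ne_zero _))
  exact_mod_cast ofReal_sub_ofReal_mul_I_ne_zero (mul_ne_zero radius_ne_zero slope_ne_zero)

lemma one_le_abs_one_add_one_div {α : ℝ} (hα₀ : α ≠ 0) (hα : -1 / 2 ≤ α) :
    1 ≤ |1 + 1 / α| := by
  rcases hα₀.lt_or_gt with hneg | hpos
  · have : 1 / α ≤ -2 := by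
      rw [div_le_iff_of_neg hneg]
      linarith
    exact le_abs.mpr (.inr (by linarith))
  · exact le_abs.mpr (.inl (le_add_of_nonneg_right (one_div_pos.mpr hpos).le))

theorem stmt7_general (α : ℝ) (hα₀ : α ≠ 0) (hα : -1 / 2 ≤ α) :
    ∀ φ ∈ Set.Ioo 0 Real.pi, ∃ D : ℂ, HasDerivAt (xi α) D φ ∧ D ≠ 0 :=
  fun _ hφ ↦ exists_hasDerivAt_xi_ne_zero (Th_pos (one_le_abs_one_add_one_div hα₀ hα) hφ)

theorem stmt7 (α : ℝ) (hα : 0 < α) :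
    ∀ φ ∈ Set.Ioo 0 Real.pi, ∃ D : ℂ, HasDerivAt (xi α) D φ ∧ D ≠ 0 :=
  stmt7_general α hα.ne' (by linarith)
end
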